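/- Let g be a complex semisimple Lie algebra with decomposition g = g₁ ⊕ ⋯ ⊕ g_r into simple ideals, let G = Aut(g)⁰ be its adjoint group acting on V = g, and let φ ∈ G'. Then φ(g_i) = g_i for every i, and for each i the restriction φ|_{g_i} equals ε_i·σ_i where ε_i ∈ {1, −1} and σ_i is a Lie algebra automorphism of g_i. -/

import Mathlib

noncomputable section

/-- A function `V → ℂ` is a polynomial function if it lies in the subalgebra of
functions generated by the linear functionals, i.e. it is given by a polynomial
in linear coordinates. -/
def IsPolyFun {V : Type*} [AddCommGroup V] [Module ℂ V] (f : V → ℂ) : Prop :=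
  f ∈ Algebra.adjoin ℂ (Set.range fun l : V →ₗ[ℂ] ℂ => (l : V → ℂ))

/-- Given a subgroup `G` of `GL(V)`, the group `G'` of all linear automorphisms of `V`
preserving every `G`-invariant polynomial function on `V`. -/
def primeGroup {V : Type*} [AddCommGroup V] [Module ℂ V]
    (G : Subgroup (V ≃ₗ[ℂ] V)) : Subgroup (V ≃ₗ[ℂ] V) where
  carrier := {φ | ∀ f : V → ℂ, IsPolyFun f →
      (∀ g ∈ G, ∀ v : V, f (g v) = f v) → ∀ v : V, f (φ v) = f v}
  one_mem' := by intro f _ _ v; rfl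
  mul_mem' := by
    intro a b ha hb f hf hinv v
    have h2 : f (a (b v)) = f (b v) := ha f hf hinv (b v)
    exact h2.trans (hb f hf hinv v)
  inv_mem' := by
    intro a ha f hf hinv v
    have h := ha f hf hinv (a⁻¹ v)
    have : a (a⁻¹ v) = v := a.apply_symm_apply v
    rw [this] at h
    exact h.symm

/-- The algebraic exponential of an endomorphism of a finite-dimensional space
(intended for nilpotent endomorphisms, where the series is a finite sum). -/
def endExp {g : Type*} [AddCommGroup g] [Module ℂ g] [FiniteDimensional ℂ g]
    (A : Module.End ℂ g) : Module.End ℂ g :=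
  ∑ k ∈ Finset.range (Module.finrank ℂ g + 1), (k.factorial : ℂ)⁻¹ • A ^ k

/-- The adjoint group `G = Aut(g)⁰` of a semisimple Lie algebra `g`: the subgroup of
`GL(g)` generated by the exponentials of nilpotent inner derivations `ad x`. -/
def adjointGroup (g : Type*) [LieRing g] [LieAlgebra ℂ g] [FiniteDimensional ℂ g] :
    Subgroup (g ≃ₗ[ℂ] g) :=
  Subgroup.closure {u : g ≃ₗ[ℂ] g | ∃ x : g,
    IsNilpotent (LieAlgebra.ad ℂ g x) ∧ (u : g →ₗ[ℂ] g) = endExp (LieAlgebra.ad ℂ g x)}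

/-- The subgroup of `GL(g)` fixing a subalgebra `t` pointwise. -/
def pointwiseStab {g : Type*} [LieRing g] [LieAlgebra ℂ g]
    (t : LieSubalgebra ℂ g) : Subgroup (g ≃ₗ[ℂ] g) where
  carrier := {u | ∀ x ∈ t, u x = x}
  one_mem' := by intro x _; rfl
  mul_mem' := by
    intro a b ha hb x hx
    have : a (b x) = a x := by rw [hb x hx]
    exact this.trans (ha x hx)
  inv_mem' := by
    intro a ha x hx
    conv_lhs => rw [← ha x hx]
    exact a.symm_apply_apply x

/-- The maximal torus of the adjoint group corresponding to a Cartan subalgebra `t`: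
the elements of the adjoint group acting trivially on `t`. -/
def maximalTorus (g : Type*) [LieRing g] [LieAlgebra ℂ g] [FiniteDimensional ℂ g]
    (t : LieSubalgebra ℂ g) : Subgroup (g ≃ₗ[ℂ] g) :=
  adjointGroup g ⊓ pointwiseStab t

/-!
The functions `v ↦ tr ((ad (P v)) ^ k)`, with `P` in the centroid of the Lie algebra, are invariant
polynomials, so `φ` preserves all of them. Taking `k = 2` and `P` the projection onto the Killing
complement of an ideal shows that `φ` preserves the ideal. Taking `P = 1` and all `k` shows that
conjugation by `φ` maps `ad g` into the module `M` of linear maps `D` such that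
`tr ((ad v) ^ k ∘ ad (D v)) = 0` for all `v` and `k`. Decomposing `M` into weight spaces for a
Cartan subalgebra gives `M = ad g`. Hence `φ ∘ ad x ∘ φ⁻¹ = ad (φ (C x))`, where `C` lies in the
centroid and is therefore a scalar `ε` on each simple ideal, and since both `φ` and `φ ∘ C` preserve
the Killing form, `ε² = 1`.
-/

section Polarization

open Polynomial

variable {K R V : Type*} [Field K] [Ring R] [Algebra K R] [AddCommGroup V] [Module K V]

lemma map_coeff_eq_zero_of_forall_map_eval_eq_zero [Infinite K] (l : R →ₗ[K] K) (p : R[X])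
    (h : ∀ t : K, l (p.eval (algebraMap K R t)) = 0) (n : ℕ) : l (p.coeff n) = 0 := by
  have hsum : ∑ i ∈ Finset.range (p.natDegree + 1), monomial i (l (p.coeff i)) = 0 := by
    refine Polynomial.funext fun t ↦ ?_
    rw [eval_zero, ← h t, p.eval_eq_sum_range, map_sum, eval_finsetSum]
    refine Finset.sum_congr rfl fun i _ ↦ ?_
    rw [eval_monomial, ← map_pow, ← Algebra.commutes, ← Algebra.smul_def, map_smul, smul_eq_mul,
      mul_comm]
  by_cases hn : n ≤ p.natDegree
  · simpa [coeff_monomial, Nat.lt_succ_iff, hn] using congrArg (coeff · n) hsum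
  · rw [coeff_eq_zero_of_natDegree_lt (not_le.mp hn), map_zero]

lemma eval_algebraMap_mul (p q : R[X]) (t : K) :
    (p * q).eval (algebraMap K R t) = p.eval (algebraMap K R t) * q.eval (algebraMap K R t) :=
  eval₂_mul_noncomm _ _ fun _ ↦ (Algebra.commutes t _).symm

lemma eval_algebraMap_linear (a b : R) (t : K) :
    (C a + C b * X).eval (algebraMap K R t) = a + t • b := by
  rw [eval_add, eval_C, eval_mul_X, eval_C, ← Algebra.commutes, ← Algebra.smul_def]

lemma eval_algebraMap_linear_pow (a b : R) (k : ℕ) (t : K) :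
    ((C a + C b * X) ^ k).eval (algebraMap K R t) = (a + t • b) ^ k := by
  induction k with
  | zero => simp
  | succ k ih => rw [pow_succ, eval_algebraMap_mul, ih, eval_algebraMap_linear, pow_succ]

lemma coeff_zero_linear_pow (a b : R) (k : ℕ) : ((C a + C b * X) ^ k).coeff 0 = a ^ k := by
  rw [← constantCoeff_apply, map_pow]
  simp

lemma coeff_one_linear_pow_succ (a b : R) (k : ℕ) :
    ((C a + C b * X) ^ (k + 1)).coeff 1 = a ^ k * b + ((C a + C b * X) ^ k).coeff 1 * a := by
  simp [pow_succ _ k, mul_coeff_one, coeff_zero_linear_pow]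

lemma coeff_one_linear_pow_lie (x a : R) (k : ℕ) :
    ((C a + C ⁅x, a⁆ * X) ^ k).coeff 1 = ⁅x, a ^ k⁆ := by
  induction k with
  | zero => simp [Ring.lie_def, coeff_one]
  | succ k ih =>
    rw [coeff_one_linear_pow_succ, ih, pow_succ]
    simp only [Ring.lie_def]
    noncomm_ring

lemma map_coeff_one_linear_pow_mul_pow (l : R →ₗ[K] K) (hl : ∀ x y, l (x * y) = l (y * x))
    (a b : R) (k m : ℕ) :
    l (((C a + C b * X) ^ (k + 1)).coeff 1 * a ^ m) = (k + 1) * l (a ^ (k + m) * b) := by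
  induction k generalizing m with
  | zero => simp [hl b]
  | succ k ih =>
    rw [coeff_one_linear_pow_succ, add_mul, map_add, mul_assoc _ a, ← pow_succ', ih, hl,
      ← mul_assoc, ← pow_add, show m + (k + 1) = k + 1 + m by omega,
      show k + (m + 1) = k + 1 + m by omega]
    push_cast
    ring

lemma map_pow_mul_eq_of_map_pow_eq [CharZero K] (l : R →ₗ[K] K)
    (hl : ∀ x y, l (x * y) = l (y * x)) (A B : V →ₗ[K] R) (k : ℕ)
    (h : ∀ v, l (A v ^ (k + 1)) = l (B v ^ (k + 1))) (v w : V) :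
    l (A v ^ k * A w) = l (B v ^ k * B w) := by
  have hcoeff := map_coeff_eq_zero_of_forall_map_eval_eq_zero l
    ((C (A v) + C (A w) * X) ^ (k + 1) - (C (B v) + C (B w) * X) ^ (k + 1)) (fun t ↦ by
      simpa only [eval_sub, eval_algebraMap_linear_pow, map_add, map_smul, map_sub, sub_eq_zero]
        using h (v + t • w)) 1
  have hA := map_coeff_one_linear_pow_mul_pow l hl (A v) (A w) k 0
  have hB := map_coeff_one_linear_pow_mul_pow l hl (B v) (B w) k 0
  rw [pow_zero, mul_one, add_zero] at hA hB
  rw [coeff_sub, map_sub, hA, hB, ← mul_sub] at hcoeff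
  exact sub_eq_zero.mp ((mul_eq_zero.mp hcoeff).resolve_left (Nat.cast_add_one_ne_zero k))

lemma map_coeff_one_mul_add_eq_zero [Infinite K] (l : R →ₗ[K] K) (A B : V →ₗ[K] R) (k : ℕ)
    (h : ∀ v, l (A v ^ k * B v) = 0) (v w : V) :
    l (((C (A v) + C (A w) * X) ^ k).coeff 1 * B v) + l (A v ^ k * B w) = 0 := by
  have hcoeff := map_coeff_eq_zero_of_forall_map_eval_eq_zero l
    ((C (A v) + C (A w) * X) ^ k * (C (B v) + C (B w) * X)) (fun t ↦ by
      simpa only [eval_algebraMap_mul, eval_algebraMap_linear_pow, eval_algebraMap_linear, map_add,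
        map_smul] using h (v + t • w)) 1
  simpa [mul_coeff_one, coeff_zero_linear_pow, add_comm] using hcoeff

end Polarization

section PowerTraceStabilizer

open LieAlgebra

variable {K L : Type*} [Field K] [LieRing L] [LieAlgebra K L]

variable (K L) in
/-- The infinitesimal symmetries of the power traces: the linear maps `D` for which the derivative
of `v ↦ tr ((ad v) ^ (k + 1))` at `v` in the direction `D v` vanishes for all `v` and `k`, stated
without the factor `k + 1` of that derivative. -/
def powerTraceStabilizer [Infinite K] : LieSubmodule K L (L →ₗ[K] L) where
  carrier := {D | ∀ (v : L) (k : ℕ), LinearMap.trace K L (ad K L v ^ k * ad K L (D v)) = 0}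
  add_mem' ha hb v k := by
    rw [LinearMap.add_apply, map_add, mul_add, map_add, ha v k, hb v k, add_zero]
  zero_mem' v k := by simp
  smul_mem' c D hD v k := by
    rw [LinearMap.smul_apply, map_smul, mul_smul_comm, map_smul, hD v k, smul_zero]
  lie_mem {x D} hD v k := by
    have hderiv := map_coeff_one_mul_add_eq_zero (LinearMap.trace K L) (ad K L : L →ₗ[K] _)
      ((ad K L : L →ₗ[K] Module.End K L) ∘ₗ D) k (fun v ↦ hD v k) v ⁅x, v⁆
    simp only [LieHom.coe_toLinearMap, LinearMap.comp_apply, LieHom.map_lie,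
      coeff_one_linear_pow_lie] at hderiv
    have hcycle : LinearMap.trace K L (⁅ad K L x, ad K L v ^ k⁆ * ad K L (D v))
        = -LinearMap.trace K L (ad K L v ^ k * ⁅ad K L x, ad K L (D v)⁆) := by
      rw [Ring.lie_def, Ring.lie_def, sub_mul, mul_sub, map_sub, map_sub, mul_assoc (ad K L x),
        LinearMap.trace_mul_comm K (ad K L x), mul_assoc, mul_assoc, neg_sub]
    simp only [LieHom.lie_apply, LieHom.map_lie, map_sub, mul_sub]
    linear_combination hcycle - hderiv

lemma ad_mem_powerTraceStabilizer [Infinite K] (x : L) :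
    (ad K L x : L →ₗ[K] L) ∈ powerTraceStabilizer K L := fun v k ↦ by
  simp only [ad_apply, LieHom.map_lie, Ring.lie_def, mul_sub, map_sub]
  rw [← mul_assoc, LinearMap.trace_mul_comm K (_ * _), ← mul_assoc, ← mul_assoc, ← pow_succ,
    ← pow_succ', sub_self]

lemma conj_ad_mem_powerTraceStabilizer [CharZero K] (φ : L ≃ₗ[K] L)
    (hφ : ∀ (v : L) (k : ℕ),
      LinearMap.trace K L (ad K L (φ v) ^ k) = LinearMap.trace K L (ad K L v ^ k)) (x : L) :
    φ.conj (ad K L x) ∈ powerTraceStabilizer K L := fun v k ↦ by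
  obtain ⟨v, rfl⟩ := φ.surjective v
  have hpolar := map_pow_mul_eq_of_map_pow_eq (LinearMap.trace K L) (LinearMap.trace_mul_comm K)
    ((ad K L : L →ₗ[K] Module.End K L) ∘ₗ φ) (ad K L : L →ₗ[K] _) k (fun v ↦ hφ v (k + 1)) v ⁅x, v⁆
  rw [LinearEquiv.conj_apply_apply, φ.symm_apply_apply]
  exact hpolar.trans (ad_mem_powerTraceStabilizer x v k)

end PowerTraceStabilizer

section WeightSpaces

open LieModule

variable {K L M : Type*} [Field K] [LieRing L] [LieAlgebra K L] [LieRing.IsNilpotent L]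
  [AddCommGroup M] [Module K M] [LieRingModule L M] [LieModule K L M]

lemma apply_mem_genWeightSpace_add {N : Type*} [AddCommGroup N] [Module K N] [LieRingModule L N]
    [LieModule K L N] {f : M →ₗ[K] N} {m : M} {μ χ : L → K}
    (hf : f ∈ genWeightSpace (M →ₗ[K] N) μ) (hm : m ∈ genWeightSpace M χ) :
    f m ∈ genWeightSpace N (μ + χ) := by
  simp only [genWeightSpace, LieSubmodule.mem_iInf, genWeightSpaceOf] at hf hm ⊢
  exact fun x ↦ LieModule.weight_vector_multiplication (M →ₗ[K] N) M N
    (TensorProduct.LieModule.liftLie K L (M →ₗ[K] N) M N LieModuleHom.id) (μ x) (χ x) x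
    ⟨⟨f, hf x⟩ ⊗ₜ ⟨m, hm x⟩, by simp⟩

lemma trace_eq_sum_finrank_mul_of_smul_genWeightSpace [FiniteDimensional K M]
    [IsTriangularizable K L M] (f : Module.End K M) (c : Weight K L M → K)
    (h : ∀ χ : Weight K L M, ∀ m ∈ genWeightSpace M χ, f m = c χ • m) :
    LinearMap.trace K M f = ∑ χ : Weight K L M, Module.finrank K (genWeightSpace M χ) * c χ := by
  classical
  have hinternal := DirectSum.isInternal_submodule_of_iSupIndep_of_iSup_eq_top
    (LieSubmodule.iSupIndep_toSubmodule.mpr <| iSupIndep_genWeightSpace' K L M)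
    (LieSubmodule.iSup_toSubmodule_eq_top.mpr <| iSup_genWeightSpace_eq_top' K L M)
  have hmaps (χ : Weight K L M) :
      Set.MapsTo f (genWeightSpace M χ).toSubmodule (genWeightSpace M χ).toSubmodule := by
    intro m hm
    rw [h χ m hm]
    exact Submodule.smul_mem _ _ hm
  rw [LinearMap.trace_eq_sum_trace_restrict hinternal hmaps]
  refine Finset.sum_congr rfl fun χ _ ↦ ?_
  have hrestrict : f.restrict (hmaps χ) = c χ • LinearMap.id := by
    ext m
    exact h χ m m.2
  rw [hrestrict, map_smul, LinearMap.trace_id, smul_eq_mul, mul_comm]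
  rfl

lemma exists_ne_zero_and_injective_weight_apply [Infinite K] [FiniteDimensional K M]
    [LinearWeights K L M] {f : Module.Dual K L} (hf : f ≠ 0) :
    ∃ x : L, f x ≠ 0 ∧ Function.Injective fun χ : Weight K L M ↦ χ x := by
  let F : Option {p : Weight K L M × Weight K L M // p.1 ≠ p.2} → Module.Dual K L
    | none => f
    | some p => p.1.1.toLinear - p.1.2.toLinear
  have hF : ∀ o, ∃ x, F o x ≠ 0 := by
    rintro (_ | ⟨⟨χ, χ'⟩, hne⟩)
    · exact DFunLike.ne_iff.mp hf
    · simpa [F, sub_ne_zero, DFunLike.ne_iff] using hne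
  obtain ⟨x, hx⟩ := Module.Dual.exists_forall_ne_zero_of_forall_exists F hF
  refine ⟨x, hx none, fun χ χ' heq ↦ ?_⟩
  by_contra hne
  exact hx (some ⟨(χ, χ'), hne⟩) (sub_eq_zero.mpr heq)

end WeightSpaces

lemma eq_zero_of_forall_sum_mul_pow_eq_zero {ι A : Type*} [Fintype ι] [CommRing A] [IsDomain A]
    {f v : ι → A} (hf : Function.Injective f) (h : ∀ k : ℕ, ∑ i, v i * f i ^ k = 0) : v = 0 := by
  let e := Fintype.equivFin ι
  have hv : v ∘ e.symm = 0 := Matrix.eq_zero_of_forall_pow_sum_mul_pow_eq_zero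
    (hf.comp e.symm.injective) fun k ↦ (e.symm.sum_comp fun i ↦ v i * f i ^ (k : ℕ)).trans (h k)
  funext i
  simpa using congrFun hv (e i)

section Cartan

open LieAlgebra LieModule

variable {K L : Type*} [Field K] [LieRing L] [LieAlgebra K L]
  {H : LieSubalgebra K L}

lemma ad_mem_genWeightSpace [LieRing.IsNilpotent H] {α : H → K} {a : L} (ha : a ∈ rootSpace H α) :
    (ad K L a : L →ₗ[K] L) ∈ genWeightSpace (L →ₗ[K] L) α := by
  let f : L →ₗ⁅K,H⁆ (L →ₗ[K] L) :=
    { (ad K L : L →ₗ[K] Module.End K L) with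
      map_lie' := fun {h x} ↦ by
        ext y
        simp [LieHom.lie_apply, LieSubalgebra.coe_bracket_of_module] }
  exact map_genWeightSpace_le f ⟨a, ha, rfl⟩

variable [FiniteDimensional K L] [H.IsCartanSubalgebra]

lemma apply_cartan_mem_rootSpace {D : L →ₗ[K] L} {μ : H → K}
    (hD : D ∈ genWeightSpace (L →ₗ[K] L) μ) (h : H) :
    D h ∈ rootSpace H μ := by
  have hh : (h : L) ∈ rootSpace H (0 : H → K) := by
    rw [rootSpace_zero_eq]
    exact h.2
  simpa using apply_mem_genWeightSpace_add hD hh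

variable [IsTriangularizable K H L]

lemma eq_top_of_cartan_le_of_rootSpace_le {P : Submodule K L} (hH : H.toSubmodule ≤ P)
    (hroot : ∀ α : Weight K H L, α.IsNonZero → (rootSpace H α).toSubmodule ≤ P) : P = ⊤ := by
  have hsup := congrArg LieSubmodule.toSubmodule
    (cartan_sup_iSup_rootSpace_eq_top (K := K) (L := L) (H := H))
  simp only [LieSubmodule.sup_toSubmodule, LieSubmodule.iSup_toSubmodule,
    LieSubmodule.top_toSubmodule] at hsup
  rw [eq_top_iff, ← hsup]
  exact sup_le hH (iSup₂_le hroot)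

variable [CharZero K] [IsKilling K L]

lemma lie_coe_eq_neg_smul_of_mem_rootSpace {α : H → K} {x : L} (hx : x ∈ rootSpace H α) (h : H) :
    ⁅x, (h : L)⁆ = -(α h • x) := by
  rw [← lie_skew, ← IsKilling.lie_eq_smul_of_mem_rootSpace hx h,
    LieSubalgebra.coe_bracket_of_module]

lemma trace_ad_pow_mul_ad_cartan (h h' : H) (k : ℕ) :
    LinearMap.trace K L (ad K L h ^ k * ad K L h')
      = ∑ χ : Weight K H L, (Module.finrank K (genWeightSpace L χ) * χ h') * χ h ^ k := by
  have hsmul (χ : Weight K H L) (x : L) (hx : x ∈ genWeightSpace L χ) :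
      (ad K L h ^ k * ad K L h') x = (χ h' * χ h ^ k) • x := by
    have heigen (h : H) : ad K L h x = χ h • x := IsKilling.lie_eq_smul_of_mem_rootSpace hx h
    have hpow : (ad K L h ^ k) x = χ h ^ k • x := by
      induction k with
      | zero => simp
      | succ k ih => rw [pow_succ, Module.End.mul_apply, heigen, map_smul, ih, smul_smul, pow_succ']
    rw [Module.End.mul_apply, heigen, map_smul, hpow, smul_smul]
  rw [trace_eq_sum_finrank_mul_of_smul_genWeightSpace _ _ hsmul]
  simp only [mul_assoc]

lemma eq_zero_of_forall_trace_ad_pow_mul_ad_eq_zero (f : H →ₗ[K] H)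
    (hf : ∀ (h : H) (k : ℕ), LinearMap.trace K L (ad K L h ^ k * ad K L (f h)) = 0) : f = 0 := by
  by_contra hne
  obtain ⟨α, hα⟩ : ∃ α : Weight K H L, α.toLinear ∘ₗ f ≠ 0 := by
    by_contra! hall
    refine hne (LinearMap.ext fun h ↦ ?_)
    rw [LinearMap.zero_apply, ← Submodule.mem_bot K, ← IsKilling.iInf_ker_weight_eq_bot (H := H),
      Submodule.mem_iInf]
    exact fun α ↦ LinearMap.congr_fun (hall α) h
  obtain ⟨h, hαh, hinj⟩ := exists_ne_zero_and_injective_weight_apply (M := L) hα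
  have hvanish := congrFun (eq_zero_of_forall_sum_mul_pow_eq_zero hinj fun k ↦
    (trace_ad_pow_mul_ad_cartan h (f h) k).symm.trans (hf h k)) α
  have hdim : (Module.finrank K (genWeightSpace L α) : K) ≠ 0 :=
    mod_cast (zero_lt_finrank_genWeightSpace α.genWeightSpace_ne_bot).ne'
  exact hαh ((mul_eq_zero.mp hvanish).resolve_left hdim)

lemma eq_zero_of_mem_rootSpace_of_forall_lie_eq_zero {α : H → K} (hα : α ≠ 0) {y : L}
    (hy : y ∈ rootSpace H α) (h : ∀ z ∈ rootSpace H (-α), ⁅z, y⁆ = 0) : y = 0 := by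
  by_cases hbot : rootSpace H α = ⊥
  · rwa [hbot, LieSubmodule.mem_bot] at hy
  let α' : Weight K H L := ⟨α, hbot⟩
  have hdual : ((IsKilling.cartanEquivDual H).symm α' : L) ≠ 0 := fun hzero ↦
    IsKilling.root_apply_cartanEquivDual_symm_ne_zero (α := α') hα
      ((congrArg α'.toLinear (Subtype.ext hzero)).trans (map_zero _))
  have hker : y ∈ LinearMap.ker (killingForm K L) := by
    refine mem_ker_killingForm_of_mem_rootSpace_of_forall_rootSpace_neg K L H hy fun z hz ↦ ?_
    have hlie := IsKilling.lie_eq_killingForm_smul_of_mem_rootSpace_of_mem_rootSpace_neg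
      (α := α') hy hz
    rw [← lie_skew, h z hz, neg_zero] at hlie
    exact (smul_eq_zero.mp hlie.symm).resolve_right hdual
  rwa [IsKilling.ker_killingForm_eq_bot, Submodule.mem_bot] at hker

lemma weight_eq_neg_or_eq_of_ker_le {α β : Weight K H L} (hβ : β.IsNonZero) (h : α.ker ≤ β.ker) :
    β = -α ∨ β = α := by
  obtain ⟨c, hc⟩ : ∃ c : K, c • α.toLinear = β.toLinear := by
    have hspan := mem_span_of_iInf_ker_le_ker (L := fun _ : Unit ↦ α.toLinear) (K := β.toLinear)
      (by simpa using h)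
    rwa [Set.range_const, Submodule.mem_span_singleton] at hspan
  exact IsKilling.eq_neg_or_eq_of_eq_smul α β hβ c (funext fun h ↦ (LinearMap.congr_fun hc h).symm)

lemma lie_apply_eq_of_mem_rootSpace {α : Weight K H L} (hα : α.IsNonZero) {x z : L}
    (hx : x ∈ rootSpace H α) (hz : z ∈ rootSpace H α) (D : L →ₗ[K] L) :
    ⁅x, D⁆ z = ⁅z, D x⁆ := by
  rcases eq_or_ne x 0 with rfl | hx0
  · simp
  obtain ⟨a, ha⟩ := (finrank_eq_one_iff_of_nonzero' (⟨x, hx⟩ : rootSpace H α)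
    (by simpa using hx0)).mp (IsKilling.finrank_rootSpace_eq_one α hα) ⟨z, hz⟩
  obtain rfl : a • x = z := congrArg Subtype.val ha
  simp [LieHom.lie_apply]

section WeightVectors

variable {D : L →ₗ[K] L} {μ : H → K}

lemma apply_cartan_eq_zero_of_mem_powerTraceStabilizer (hD : D ∈ powerTraceStabilizer K L)
    (hD₀ : D ∈ genWeightSpace (L →ₗ[K] L) (0 : H → K)) (h : H) : D h = 0 := by
  have hmaps : ∀ x ∈ H.toSubmodule, D x ∈ H.toSubmodule := fun x hx ↦ by
    simpa using apply_cartan_mem_rootSpace hD₀ ⟨x, hx⟩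
  have hrestrict := eq_zero_of_forall_trace_ad_pow_mul_ad_eq_zero (D.restrict hmaps)
    fun h k ↦ hD h k
  exact congrArg Subtype.val (LinearMap.congr_fun hrestrict h)

lemma lie_apply_cartan_of_mem_rootSpace (hDH : ∀ h : H, D h = 0) {α : H → K} {x : L}
    (hx : x ∈ rootSpace H α) (h : H) : ⁅x, D⁆ (h : L) = α h • D x := by
  rw [LieHom.lie_apply, hDH, lie_zero, lie_coe_eq_neg_smul_of_mem_rootSpace hx, map_neg, map_smul,
    zero_sub, neg_neg]

lemma smul_lie_add_smul_eq_zero_of_mem_powerTraceStabilizer (hD : D ∈ powerTraceStabilizer K L)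
    (hDμ : D ∈ genWeightSpace (L →ₗ[K] L) μ) (hDH : ∀ h : H, D h = 0) {α β : H → K} {x z : L}
    (hx : x ∈ rootSpace H α) (hz : z ∈ rootSpace H β) (hsum : β + (α + μ) = 0) (h : H) :
    α h • ⁅z, D x⁆ + β h • ⁅x, D⁆ z = 0 := by
  have hweight : ⁅z, ⁅x, D⁆⁆ ∈ genWeightSpace (L →ₗ[K] L) (0 : H → K) := hsum ▸
    lie_mem_genWeightSpace_of_mem_genWeightSpace hz <|
      lie_mem_genWeightSpace_of_mem_genWeightSpace hx hDμ
  have hzero := apply_cartan_eq_zero_of_mem_powerTraceStabilizer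
    (LieSubmodule.lie_mem _ (LieSubmodule.lie_mem _ hD)) hweight h
  rwa [LieHom.lie_apply, lie_apply_cartan_of_mem_rootSpace hDH hx,
    lie_coe_eq_neg_smul_of_mem_rootSpace hz, lie_smul, map_neg, map_smul, sub_neg_eq_add] at hzero

lemma lie_apply_eq_zero_of_mem_powerTraceStabilizer (hD : D ∈ powerTraceStabilizer K L)
    (hDμ : D ∈ genWeightSpace (L →ₗ[K] L) μ) (hμ : μ ≠ 0) (hDH : ∀ h : H, D h = 0)
    {α β : Weight K H L} (hα : α.IsNonZero) {x z : L}
    (hx : x ∈ rootSpace H α) (hz : z ∈ rootSpace H β) (hsum : (β : H → K) + (α + μ) = 0) :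
    ⁅z, D x⁆ = 0 := by
  have hrel := smul_lie_add_smul_eq_zero_of_mem_powerTraceStabilizer hD hDμ hDH hx hz hsum
  by_cases hker : β.ker ≤ α.ker
  · rcases weight_eq_neg_or_eq_of_ker_le hα hker with rfl | rfl
    · refine absurd ?_ hμ
      simpa using hsum
    · obtain ⟨h, hh⟩ := Function.ne_iff.mp hα
      have := hrel h
      rw [lie_apply_eq_of_mem_rootSpace hα hx hz, ← two_smul K, smul_smul] at this
      exact (smul_eq_zero.mp this).resolve_left (mul_ne_zero two_ne_zero hh)
  · obtain ⟨h, hβh, hαh⟩ := SetLike.not_le_iff_exists.mp hker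
    have := hrel h
    rw [show β h = 0 from hβh, zero_smul, add_zero] at this
    exact (smul_eq_zero.mp this).resolve_left hαh

lemma apply_rootSpace_eq_zero_of_mem_powerTraceStabilizer (hD : D ∈ powerTraceStabilizer K L)
    (hDμ : D ∈ genWeightSpace (L →ₗ[K] L) μ) (hμ : μ ≠ 0) (hDH : ∀ h : H, D h = 0)
    {α : Weight K H L} (hα : α.IsNonZero) {x : L} (hx : x ∈ rootSpace H α) : D x = 0 := by
  by_cases hsum : (α : H → K) + μ = 0
  · obtain ⟨h, hh⟩ := Function.ne_iff.mp hα
    have hzero := apply_cartan_eq_zero_of_mem_powerTraceStabilizer (LieSubmodule.lie_mem _ hD)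
      (hsum ▸ lie_mem_genWeightSpace_of_mem_genWeightSpace hx hDμ) h
    rw [lie_apply_cartan_of_mem_rootSpace hDH hx] at hzero
    exact (smul_eq_zero.mp hzero).resolve_left hh
  · have hDx := apply_mem_genWeightSpace_add hDμ hx
    rw [add_comm] at hDx
    refine eq_zero_of_mem_rootSpace_of_forall_lie_eq_zero hsum hDx fun z hz ↦ ?_
    by_cases hbot : rootSpace H (-(α + μ)) = ⊥
    · rw [hbot, LieSubmodule.mem_bot] at hz
      rw [hz, zero_lie]
    · exact lie_apply_eq_zero_of_mem_powerTraceStabilizer (β := ⟨_, hbot⟩) hD hDμ hμ hDH hα hx hz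
        (neg_add_cancel _)

lemma eq_zero_of_mem_powerTraceStabilizer (hD : D ∈ powerTraceStabilizer K L)
    (hDμ : D ∈ genWeightSpace (L →ₗ[K] L) μ) (hμ : μ ≠ 0) (hDH : ∀ h : H, D h = 0) : D = 0 := by
  rw [← LinearMap.ker_eq_top]
  exact eq_top_of_cartan_le_of_rootSpace_le (fun h hh ↦ hDH ⟨h, hh⟩) fun α hα x hx ↦
    apply_rootSpace_eq_zero_of_mem_powerTraceStabilizer hD hDμ hμ hDH hα hx

lemma apply_cartan_eq_zero_of_weight_apply_eq_zero (hD : D ∈ powerTraceStabilizer K L)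
    (hDμ : D ∈ genWeightSpace (L →ₗ[K] L) μ) (hμ : μ ≠ 0) {h : H} (hh : μ h = 0) : D h = 0 := by
  refine eq_zero_of_mem_rootSpace_of_forall_lie_eq_zero hμ (apply_cartan_mem_rootSpace hDμ h)
    fun z hz ↦ ?_
  have hzero := apply_cartan_eq_zero_of_mem_powerTraceStabilizer (LieSubmodule.lie_mem _ hD)
    (neg_add_cancel μ ▸ lie_mem_genWeightSpace_of_mem_genWeightSpace hz hDμ) h
  rwa [LieHom.lie_apply, lie_coe_eq_neg_smul_of_mem_rootSpace hz, Pi.neg_apply, hh, neg_zero,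
    zero_smul, neg_zero, map_zero, sub_zero] at hzero

lemma exists_apply_cartan_eq_lie (hD : D ∈ powerTraceStabilizer K L)
    (hDμ : D ∈ genWeightSpace (L →ₗ[K] L) μ) (hμ : μ ≠ 0) :
    ∃ a ∈ rootSpace H μ, ∀ h : H, D h = ⁅a, (h : L)⁆ := by
  by_cases hbot : rootSpace H μ = ⊥
  · refine ⟨0, zero_mem _, fun h ↦ ?_⟩
    have hDh := apply_cartan_mem_rootSpace hDμ h
    rw [hbot, LieSubmodule.mem_bot] at hDh
    rw [hDh, zero_lie]
  let α : Weight K H L := ⟨μ, hbot⟩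
  let h₀ : H := IsKilling.coroot α
  have hα : α.IsNonZero := hμ
  have ha : -(2⁻¹ : K) • D h₀ ∈ rootSpace H μ :=
    Submodule.smul_mem _ _ (apply_cartan_mem_rootSpace hDμ h₀)
  refine ⟨_, ha, fun h ↦ ?_⟩
  have hα_sub : Weight.toLinear K H L α (h - (α h / 2) • h₀) = 0 := by
    rw [map_sub, map_smul, Weight.toLinear_apply, Weight.toLinear_apply,
      IsKilling.root_apply_coroot hα, smul_eq_mul, div_mul_cancel₀ _ two_ne_zero, sub_self]
  have hD_sub := apply_cartan_eq_zero_of_weight_apply_eq_zero hD hDμ hμ hα_sub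
  rw [AddSubgroupClass.coe_sub, SetLike.val_smul, map_sub, map_smul, sub_eq_zero] at hD_sub
  rw [hD_sub, lie_coe_eq_neg_smul_of_mem_rootSpace ha, smul_smul, ← neg_smul, mul_neg,
    neg_neg, div_eq_mul_inv]
  rfl

lemma eq_ad_of_apply_cartan_eq_lie (hD : D ∈ powerTraceStabilizer K L)
    (hDμ : D ∈ genWeightSpace (L →ₗ[K] L) μ) (hμ : μ ≠ 0) {a : L} (ha : a ∈ rootSpace H μ)
    (hDa : ∀ h : H, D h = ⁅a, (h : L)⁆) : D = ad K L a := by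
  rw [← sub_eq_zero]
  refine eq_zero_of_mem_powerTraceStabilizer (sub_mem hD (ad_mem_powerTraceStabilizer a))
    (sub_mem hDμ (ad_mem_genWeightSpace ha)) hμ fun h ↦ ?_
  rw [LinearMap.sub_apply, hDa, ad_apply, sub_self]

lemma lie_eq_neg_ad_of_mem_rootSpace (hD : D ∈ powerTraceStabilizer K L)
    (hD₀ : D ∈ genWeightSpace (L →ₗ[K] L) (0 : H → K)) {α : H → K} (hα : α ≠ 0) {x : L}
    (hx : x ∈ rootSpace H α) : ⁅x, D⁆ = -ad K L (D x) := by
  have hDx : -D x ∈ rootSpace H α := neg_mem (by simpa using apply_mem_genWeightSpace_add hD₀ hx)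
  have hweight := lie_mem_genWeightSpace_of_mem_genWeightSpace hx hD₀
  rw [add_zero] at hweight
  rw [← map_neg]
  refine eq_ad_of_apply_cartan_eq_lie (LieSubmodule.lie_mem _ hD) hweight hα hDx fun h ↦ ?_
  rw [lie_apply_cartan_of_mem_rootSpace
    (apply_cartan_eq_zero_of_mem_powerTraceStabilizer hD hD₀) hx,
    lie_coe_eq_neg_smul_of_mem_rootSpace hDx, smul_neg, neg_neg]

lemma lie_eq_zero_of_mem_cartan (hD : D ∈ powerTraceStabilizer K L)
    (hD₀ : D ∈ genWeightSpace (L →ₗ[K] L) (0 : H → K)) (h : H) : ⁅(h : L), D⁆ = 0 := by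
  rw [← LinearMap.ker_eq_top]
  refine eq_top_of_cartan_le_of_rootSpace_le (H := H) (fun k hk ↦ ?_) fun α _ x hx ↦ ?_
  · exact apply_cartan_eq_zero_of_mem_powerTraceStabilizer (LieSubmodule.lie_mem _ hD)
      (LieSubmodule.lie_mem _ hD₀ : ⁅h, D⁆ ∈ _) ⟨k, hk⟩
  · have hDx : D x ∈ rootSpace H α := by simpa using apply_mem_genWeightSpace_add hD₀ hx
    rw [LinearMap.mem_ker, LieHom.lie_apply, ← LieSubalgebra.coe_bracket_of_module,
      ← LieSubalgebra.coe_bracket_of_module,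
      IsKilling.lie_eq_smul_of_mem_rootSpace hx, IsKilling.lie_eq_smul_of_mem_rootSpace hDx,
      map_smul, sub_self]

lemma lie_eq_neg_ad (hD : D ∈ powerTraceStabilizer K L)
    (hD₀ : D ∈ genWeightSpace (L →ₗ[K] L) (0 : H → K)) (x : L) : ⁅x, D⁆ = -ad K L (D x) := by
  let P : Submodule K L := LinearMap.eqLocus
    ((LieModule.toEnd K L (L →ₗ[K] L) : L →ₗ[K] Module.End K (L →ₗ[K] L)).flip D)
    (-((ad K L : L →ₗ[K] Module.End K L) ∘ₗ D))
  suffices P = ⊤ from (this ▸ Submodule.mem_top : x ∈ P)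
  refine eq_top_of_cartan_le_of_rootSpace_le (H := H) (fun h hh ↦ ?_) fun α hα x hx ↦
    lie_eq_neg_ad_of_mem_rootSpace hD hD₀ hα hx
  change ⁅h, D⁆ = -ad K L (D h)
  rw [lie_eq_zero_of_mem_cartan hD hD₀ ⟨h, hh⟩,
    apply_cartan_eq_zero_of_mem_powerTraceStabilizer hD hD₀ ⟨h, hh⟩, map_zero, neg_zero]

end WeightVectors

end Cartan

section InnerDerivations

open LieAlgebra LieModule

variable {K L : Type*} [Field K] [LieRing L] [LieAlgebra K L] [FiniteDimensional K L]
  [IsKilling K L] {D : L →ₗ[K] L}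

lemma exists_ad_eq_of_lie_eq_neg_ad (h : ∀ x, ⁅x, D⁆ = -ad K L (D x)) :
    ∃ a, ad K L a = D := by
  let δ : LieDerivation K L L :=
    { D with
      leibniz' := fun x y ↦ by
        have hxy := LinearMap.congr_fun (h x) y
        rw [LieHom.lie_apply, LinearMap.neg_apply, ad_apply, lie_skew, sub_eq_iff_eq_add,
          ← sub_eq_iff_eq_add'] at hxy
        exact hxy.symm }
  obtain ⟨a, ha⟩ := LieDerivation.IsKilling.exists_eq_ad δ
  exact ⟨a, LinearMap.ext fun x ↦ by simpa [δ] using DFunLike.congr_fun ha x⟩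

variable [CharZero K]

lemma exists_ad_eq_of_mem_powerTraceStabilizer_of_mem_genWeightSpace {H : LieSubalgebra K L}
    [H.IsCartanSubalgebra] [IsTriangularizable K H L] {μ : H → K}
    (hD : D ∈ powerTraceStabilizer K L) (hDμ : D ∈ genWeightSpace (L →ₗ[K] L) μ) :
    ∃ a, ad K L a = D := by
  rcases eq_or_ne μ 0 with rfl | hμ
  · exact exists_ad_eq_of_lie_eq_neg_ad (lie_eq_neg_ad hD hDμ)
  · obtain ⟨a, ha, hDa⟩ := exists_apply_cartan_eq_lie hD hDμ hμ
    exact ⟨a, (eq_ad_of_apply_cartan_eq_lie hD hDμ hμ ha hDa).symm⟩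

theorem mem_powerTraceStabilizer_iff_exists_ad_eq [IsAlgClosed K] :
    D ∈ powerTraceStabilizer K L ↔ ∃ a, ad K L a = D := by
  refine ⟨fun hD ↦ ?_, fun ⟨a, ha⟩ ↦ ha ▸ ad_mem_powerTraceStabilizer a⟩
  obtain ⟨x₀, hH⟩ := exists_isCartanSubalgebra_engel K L
  let H := LieSubalgebra.engel K x₀
  have hdecomp := congrArg LieSubmodule.toSubmodule (eq_iSup_inf_genWeightSpace (K := K) (L := H)
    (M := L →ₗ[K] L) ((powerTraceStabilizer K L).restr H))
  rw [LieSubmodule.iSup_toSubmodule] at hdecomp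
  have hle : ((powerTraceStabilizer K L).restr H).toSubmodule ≤
      LinearMap.range (ad K L : L →ₗ[K] Module.End K L) := by
    rw [hdecomp]
    exact iSup_le fun χ E hE ↦
      exists_ad_eq_of_mem_powerTraceStabilizer_of_mem_genWeightSpace hE.1 hE.2
  exact hle hD

end InnerDerivations

section Centroid

open LieAlgebra

variable {K L : Type*} [Field K] [LieRing L] [LieAlgebra K L]

/-- The projection of a Lie module onto a Lie submodule along a complementary Lie submodule. -/
def lieProjection {M : Type*} [AddCommGroup M] [Module K M] [LieRingModule L M] [LieModule K L M]
    {N N' : LieSubmodule K L M} (h : IsCompl N N') : M →ₗ⁅K,L⁆ M where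
  __ := N.toSubmodule.projection N'.toSubmodule (LieSubmodule.isCompl_toSubmodule.mpr h)
  map_lie' {x m} := by
    have hN' := Submodule.projection_add_projection_eq_self
      (LieSubmodule.isCompl_toSubmodule.mpr h) m
    have hmem := Submodule.projection_apply_mem (LieSubmodule.isCompl_toSubmodule.mpr h) m
    have hmem' := Submodule.projection_apply_mem (LieSubmodule.isCompl_toSubmodule.mpr h).symm m
    change N.toSubmodule.projection N'.toSubmodule _ ⁅x, m⁆ =
      ⁅x, N.toSubmodule.projection N'.toSubmodule _ m⁆
    conv_lhs => rw [← hN', lie_add, map_add]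
    rw [Submodule.projection_apply_of_mem_left _ (N.lie_mem hmem),
      (Submodule.projection_apply_eq_zero_iff _).mpr (N'.lie_mem hmem'), add_zero]

section Projection

variable {M : Type*} [AddCommGroup M] [Module K M] [LieRingModule L M] [LieModule K L M]
  {N N' : LieSubmodule K L M} (h : IsCompl N N')

lemma lieProjection_apply_mem (m : M) : lieProjection h m ∈ N :=
  Submodule.projection_apply_mem (LieSubmodule.isCompl_toSubmodule.mpr h) m

lemma lieProjection_apply_eq_zero_iff {m : M} : lieProjection h m = 0 ↔ m ∈ N' :=
  Submodule.projection_apply_eq_zero_iff (LieSubmodule.isCompl_toSubmodule.mpr h)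

lemma sub_lieProjection_apply_mem (m : M) : m - lieProjection h m ∈ N' :=
  Submodule.sub_projection_mem (LieSubmodule.isCompl_toSubmodule.mpr h) m

end Projection

variable (S : LieIdeal K L) [IsSimple K S]

lemma lie_self_eq_of_isSimple : ⁅S, S⁆ = S := by
  rcases IsSimple.eq_bot_or_eq_top (derivedSeries K S 1) with hbot | htop
  · exact absurd (abelian_iff_derived_one_eq_bot S |>.mpr <|
      (LieIdeal.derivedSeries_eq_bot_iff S 1).mp hbot) (IsSimple.non_abelian K)
  · have hmap := LieIdeal.derivedSeries_eq_derivedSeriesOfIdeal_map S 1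
    rw [htop, ← LieHom.idealRange_eq_map, LieIdeal.incl_idealRange] at hmap
    exact hmap.symm

lemma map_le_of_isSimple (C : L →ₗ⁅K,L⁆ L) : LieSubmodule.map C S ≤ S := by
  conv_lhs => rw [← lie_self_eq_of_isSimple S]
  rw [LieSubmodule.map_bracket_eq]
  exact LieSubmodule.lie_le_left _ _

lemma exists_forall_mem_apply_eq_smul [IsAlgClosed K] [FiniteDimensional K L]
    (C : L →ₗ⁅K,L⁆ L) : ∃ c : K, ∀ x ∈ S, C x = c • x := by
  have := IsSimple.nontrivial K S
  have hCS : ∀ x ∈ S, C x ∈ S := fun x hx ↦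
    map_le_of_isSimple S C (LieSubmodule.mem_map_of_mem hx)
  obtain ⟨c, hc⟩ := Module.End.exists_eigenvalue
    ((C : L →ₗ[K] L).restrict (p := S.toSubmodule) (q := S.toSubmodule) hCS)
  obtain ⟨v, hv, hv₀⟩ := hc.exists_hasEigenvector
  let E : LieIdeal K L := (C - c • LieModuleHom.id).ker
  have hE {x : L} : x ∈ E ↔ C x = c • x := by simp [E, sub_eq_zero]
  have hvE : (v : L) ∈ E := hE.mpr (congrArg Subtype.val (Module.End.mem_eigenspace_iff.mp hv))
  have htop : E.comap S.incl = ⊤ := (IsSimple.eq_bot_or_eq_top _).resolve_left fun hbot ↦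
    hv₀ <| (LieSubmodule.mem_bot v).mp <| hbot ▸ LieIdeal.mem_comap.mpr hvE
  exact ⟨c, fun x hx ↦ hE.mp <| LieIdeal.mem_comap.mp (htop ▸ LieSubmodule.mem_top (⟨x, hx⟩ : S))⟩

end Centroid

section KillingForm

open LieAlgebra LieModule

variable {K L : Type*} [Field K] [LieRing L] [LieAlgebra K L]

lemma lie_eq_zero_of_disjoint {I J : LieIdeal K L} (hIJ : Disjoint I J) {x y : L} (hx : x ∈ I)
    (hy : y ∈ J) : ⁅x, y⁆ = 0 := by
  rw [← LieSubmodule.mem_bot (R := K) (L := L), ← hIJ.eq_bot]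
  exact ⟨lie_mem_left K L I x y hx, lie_mem_right K L J x y hy⟩

lemma killingForm_eq_zero_of_disjoint {I J : LieIdeal K L} (hIJ : Disjoint I J) {x y : L}
    (hx : x ∈ I) (hy : y ∈ J) : killingForm K L x y = 0 := by
  have hcomp : ad K L x ∘ₗ ad K L y = 0 :=
    LinearMap.ext fun z ↦ lie_eq_zero_of_disjoint hIJ hx (lie_mem_left K L J y z hy)
  rw [killingForm_apply_apply, hcomp, map_zero]

lemma isKilling_of_iSupIndep_of_iSup_eq_top [CharZero K] [FiniteDimensional K L] {ι : Type*}
    {I : ι → LieIdeal K L} (hsimple : ∀ i, IsSimple K (I i)) (hindep : iSupIndep I)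
    (htop : ⨆ i, I i = ⊤) : IsKilling K L := by
  refine ⟨(LieSubmodule.eq_bot_iff _).mpr fun x hx ↦ ?_⟩
  have hx_mem : x ∈ ⨆ i, (I i).toSubmodule := by
    rw [← LieSubmodule.iSup_toSubmodule, htop]
    exact LieSubmodule.mem_top x
  obtain ⟨f, hf, rfl⟩ := (Submodule.mem_iSup_iff_exists_finsupp _ x).mp hx_mem
  refine Finset.sum_eq_zero fun i _ ↦ ?_
  have hsimple_i := hsimple i
  suffices (⟨f i, hf i⟩ : I i) = 0 from congrArg Subtype.val this
  refine (IsKilling.killingForm_nondegenerate K (I i)).1 _ fun y ↦ ?_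
  have horth := (LieIdeal.mem_killingCompl K L ⊤).mp hx y (LieSubmodule.mem_top _)
  rw [traceForm_comm, Finsupp.sum, map_sum, LinearMap.sum_apply, Finset.sum_eq_single i] at horth
  · rw [LieIdeal.killingForm_eq]
    exact horth
  · exact fun j _ hji ↦ killingForm_eq_zero_of_disjoint (hindep.pairwiseDisjoint hji) (hf j) y.2
  · intro hi
    rw [Finsupp.notMem_support_iff.mp hi, map_zero, LinearMap.zero_apply]

end KillingForm

section PowerTraces

open LieAlgebra LieModule

variable {K L : Type*} [Field K] [LieRing L] [LieAlgebra K L]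

lemma killingForm_map_map_eq_of_trace_ad_sq [CharZero K] {P : L →ₗ⁅K,L⁆ L} {φ : L ≃ₗ[K] L}
    (hφ : ∀ v, LinearMap.trace K L (ad K L (P (φ v)) ^ 2) = LinearMap.trace K L (ad K L (P v) ^ 2))
    (v w : L) : killingForm K L (P (φ v)) (P (φ w)) = killingForm K L (P v) (P w) := by
  have hpolar := map_pow_mul_eq_of_map_pow_eq (LinearMap.trace K L) (LinearMap.trace_mul_comm K)
    ((ad K L : L →ₗ[K] Module.End K L) ∘ₗ (P : L →ₗ[K] L) ∘ₗ φ)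
    ((ad K L : L →ₗ[K] Module.End K L) ∘ₗ (P : L →ₗ[K] L)) 1 hφ v w
  rwa [pow_one, pow_one] at hpolar

lemma killingForm_map_map_eq_of_conj_ad {C : L → L} {φ : L ≃ₗ[K] L}
    (hC : ∀ x, φ.conj (ad K L x) = ad K L (φ (C x))) (x y : L) :
    killingForm K L (φ (C x)) (φ (C y)) = killingForm K L x y := by
  rw [killingForm_apply_apply, killingForm_apply_apply, ← hC, ← hC, ← LinearEquiv.conj_comp,
    LinearMap.trace_conj']

lemma exists_lieEquiv_forall_eq_smul {S : LieIdeal K L} {φ : L ≃ₗ[K] L}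
    (hS : S.toSubmodule.map (φ : L →ₗ[K] L) = S.toSubmodule) {ε : K} (hε : ε ^ 2 = 1)
    (hlie : ∀ x ∈ S, ∀ y ∈ S, φ ⁅x, y⁆ = ε • ⁅φ x, φ y⁆) :
    ∃ σ : S ≃ₗ⁅K⁆ S, ∀ x : S, φ x = ε • (σ x : L) := by
  have hεε : ε * ε = 1 := sq ε ▸ hε
  let e : S ≃ₗ[K] S := (φ.ofSubmodules S.toSubmodule S.toSubmodule hS).trans
    (LinearEquiv.smulOfUnit (.mkOfMulEqOne ε ε hεε))
  refine ⟨{ e with map_lie' := fun {x y} ↦ Subtype.ext ?_ }, fun x ↦ ?_⟩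
  · change ε • φ ⁅(x : L), (y : L)⁆ = ⁅ε • φ x, ε • φ y⁆
    rw [hlie x x.2 y y.2, smul_lie, lie_smul]
  · change φ x = ε • ε • φ x
    rw [smul_smul, hεε, one_smul]

variable [FiniteDimensional K L] [IsKilling K L]

lemma killingForm_lieProjection_left {S : LieIdeal K L} (x y : L) :
    killingForm K L (lieProjection S.isCompl_killingCompl.symm x) y =
      killingForm K L (lieProjection S.isCompl_killingCompl.symm x)
        (lieProjection S.isCompl_killingCompl.symm y) := by
  rw [← sub_eq_zero, ← map_sub, traceForm_comm]
  exact (LieIdeal.mem_killingCompl K L S).mp (lieProjection_apply_mem _ x) _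
    (sub_lieProjection_apply_mem _ y)

lemma map_toSubmodule_eq_of_trace_ad_sq [CharZero K] (S : LieIdeal K L) {φ : L ≃ₗ[K] L}
    (hφ : ∀ (P : L →ₗ⁅K,L⁆ L) (v : L),
      LinearMap.trace K L (ad K L (P (φ v)) ^ 2) = LinearMap.trace K L (ad K L (P v) ^ 2)) :
    S.toSubmodule.map (φ : L →ₗ[K] L) = S.toSubmodule := by
  suffices S.toSubmodule.map (φ : L →ₗ[K] L) ≤ S.toSubmodule from
    Submodule.eq_of_le_of_finrank_eq this (LinearEquiv.finrank_map_eq φ _)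
  rintro _ ⟨x, hx, rfl⟩
  refine (lieProjection_apply_eq_zero_iff S.isCompl_killingCompl.symm).mp <|
    (IsKilling.killingForm_nondegenerate K L).1 _ fun z ↦ ?_
  obtain ⟨y, rfl⟩ := φ.surjective z
  rw [killingForm_lieProjection_left, LinearEquiv.coe_coe,
    killingForm_map_map_eq_of_trace_ad_sq (hφ _), (lieProjection_apply_eq_zero_iff _).mpr hx,
    map_zero, LinearMap.zero_apply]

lemma exists_lieModuleHom_conj_ad_eq [IsAlgClosed K] [CharZero K] {φ : L ≃ₗ[K] L}
    (hφ : ∀ (v : L) (k : ℕ),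
      LinearMap.trace K L (ad K L (φ v) ^ k) = LinearMap.trace K L (ad K L v ^ k)) :
    ∃ C : L →ₗ⁅K,L⁆ L, ∀ x, φ.conj (ad K L x) = ad K L (φ (C x)) := by
  have hinj : Function.Injective (ad K L) := by
    simpa only [LieHom.ker_eq_bot] using ad_ker_eq_bot_of_hasTrivialRadical K L
  choose ψ hψ using fun x ↦ mem_powerTraceStabilizer_iff_exists_ad_eq.mp
    (conj_ad_mem_powerTraceStabilizer φ hφ x)
  have hψ_lie (x y : L) : ψ ⁅x, y⁆ = ⁅ψ x, ψ y⁆ := hinj <| by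
    simp only [LieHom.map_lie, hψ, Ring.lie_def, Module.End.mul_eq_comp, LinearEquiv.conj_comp,
      map_sub]
  let C : L →ₗ⁅K,L⁆ L :=
    { toFun := fun x ↦ φ.symm (ψ x)
      map_add' := fun x y ↦ by
        rw [← map_add, φ.symm.injective.eq_iff]
        exact hinj (by rw [hψ, map_add, map_add, map_add, hψ, hψ])
      map_smul' := fun c x ↦ by
        rw [RingHom.id_apply, ← map_smul, φ.symm.injective.eq_iff]
        exact hinj (by rw [hψ, map_smul, map_smul, map_smul, hψ])
      map_lie' := fun {x y} ↦ by
        rw [φ.symm_apply_eq, hψ_lie, ← ad_apply (R := K), hψ, LinearEquiv.conj_apply_apply,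
          ad_apply] }
  exact ⟨C, fun x ↦ by rw [← hψ, ← φ.apply_symm_apply (ψ x)]; rfl⟩

lemma exists_mem_killingForm_ne_zero {S : LieIdeal K L} (hS : S ≠ ⊥) :
    ∃ x ∈ S, ∃ y ∈ S, killingForm K L x y ≠ 0 := by
  contrapose! hS
  exact S.isCompl_killingCompl.disjoint.eq_bot_of_le fun y hy ↦
    (LieIdeal.mem_killingCompl K L S).mpr fun x hx ↦ hS x hx y hy

lemma exists_sq_eq_one_forall_map_lie_eq_smul [IsAlgClosed K] [CharZero K] (S : LieIdeal K L)
    [IsSimple K S] {φ : L ≃ₗ[K] L} (hφ : ∀ (v : L) (k : ℕ),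
      LinearMap.trace K L (ad K L (φ v) ^ k) = LinearMap.trace K L (ad K L v ^ k)) :
    ∃ ε : K, ε ^ 2 = 1 ∧ ∀ x ∈ S, ∀ y, φ ⁅x, y⁆ = ε • ⁅φ x, φ y⁆ := by
  obtain ⟨C, hC⟩ := exists_lieModuleHom_conj_ad_eq hφ
  obtain ⟨ε, hε⟩ := exists_forall_mem_apply_eq_smul S C
  refine ⟨ε, ?_, fun x hx y ↦ ?_⟩
  · have hS : S ≠ ⊥ := (LieSubmodule.nontrivial_iff_ne_bot K L L).mp (IsSimple.nontrivial K S)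
    obtain ⟨x, hx, y, hy, hxy⟩ := exists_mem_killingForm_ne_zero hS
    have hκ (v w : L) : killingForm K L (φ v) (φ w) = killingForm K L v w :=
      killingForm_map_map_eq_of_trace_ad_sq (P := LieModuleHom.id) (fun v ↦ hφ v 2) v w
    refine mul_right_cancel₀ hxy ?_
    calc ε ^ 2 * killingForm K L x y
        = ε ^ 2 * killingForm K L (φ x) (φ y) := by rw [hκ]
      _ = killingForm K L (φ (C x)) (φ (C y)) := by
          simp only [hε x hx, hε y hy, map_smul, LinearMap.smul_apply, smul_eq_mul]
          ring
      _ = 1 * killingForm K L x y := by rw [killingForm_map_map_eq_of_conj_ad hC, one_mul]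
  · have hxy := LinearMap.congr_fun (hC x) (φ y)
    rwa [LinearEquiv.conj_apply_apply, φ.symm_apply_apply, ad_apply, ad_apply, hε x hx, map_smul,
      smul_lie] at hxy

theorem stmt0_general [IsAlgClosed K] [CharZero K] (S : LieIdeal K L) [IsSimple K S]
    (φ : L ≃ₗ[K] L) (hφ : ∀ (P : L →ₗ⁅K,L⁆ L) (v : L) (k : ℕ),
      LinearMap.trace K L (ad K L (P (φ v)) ^ k) = LinearMap.trace K L (ad K L (P v) ^ k)) :
    S.toSubmodule.map (φ : L →ₗ[K] L) = S.toSubmodule ∧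
      ∃ (ε : K) (σ : S ≃ₗ⁅K⁆ S), (ε = 1 ∨ ε = -1) ∧ ∀ x : S, φ x = ε • (σ x : L) := by
  have hS := map_toSubmodule_eq_of_trace_ad_sq S fun P v ↦ hφ P v 2
  obtain ⟨ε, hε, hlie⟩ := exists_sq_eq_one_forall_map_lie_eq_smul S (hφ LieModuleHom.id)
  obtain ⟨σ, hσ⟩ := exists_lieEquiv_forall_eq_smul hS hε fun x hx y _ ↦ hlie x hx y
  exact ⟨hS, ε, σ, sq_eq_one_iff.mp hε, hσ⟩

end PowerTraces

section PolynomialFunctions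

variable {V W : Type*} [AddCommGroup V] [Module ℂ V] [AddCommGroup W] [Module ℂ W]

lemma isPolyFun_linear (l : V →ₗ[ℂ] ℂ) : IsPolyFun l :=
  Algebra.subset_adjoin ⟨l, rfl⟩

lemma isPolyFun_toMatrix_pow {ι : Type*} [Fintype ι] [DecidableEq ι] (b : Module.Basis ι ℂ W)
    (A : V →ₗ[ℂ] Module.End ℂ W) (k : ℕ) (i j : ι) :
    IsPolyFun fun v ↦ LinearMap.toMatrix b b (A v ^ k) i j := by
  induction k generalizing i j with
  | zero =>
    simp only [pow_zero]
    exact Subalgebra.algebraMap_mem _ (LinearMap.toMatrix b b (1 : Module.End ℂ W) i j)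
  | succ k ih =>
    have hmul : (fun v ↦ LinearMap.toMatrix b b (A v ^ (k + 1)) i j) =
        ∑ m, (fun v ↦ LinearMap.toMatrix b b (A v ^ k) i m) *
          fun v ↦ LinearMap.toMatrix b b (A v) m j := by
      funext v
      rw [pow_succ, LinearMap.toMatrix_mul, Matrix.mul_apply, Finset.sum_apply]
      rfl
    have hentry (m : ι) : IsPolyFun fun v ↦ LinearMap.toMatrix b b (A v) m j := by
      simp only [LinearMap.toMatrix_apply]
      exact isPolyFun_linear (b.coord m ∘ₗ LinearMap.applyₗ (b j) ∘ₗ A)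
    rw [hmul]
    exact Subalgebra.sum_mem _ fun m _ ↦ Subalgebra.mul_mem _ (ih i m) (hentry m)

lemma isPolyFun_trace_pow [FiniteDimensional ℂ W] (A : V →ₗ[ℂ] Module.End ℂ W) (k : ℕ) :
    IsPolyFun fun v ↦ LinearMap.trace ℂ W (A v ^ k) := by
  let b := Module.finBasis ℂ W
  have htrace : (fun v ↦ LinearMap.trace ℂ W (A v ^ k)) =
      ∑ i, fun v ↦ LinearMap.toMatrix b b (A v ^ k) i i := by
    funext v
    rw [LinearMap.trace_eq_matrix_trace ℂ b, Finset.sum_apply]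
    rfl
  rw [htrace]
  exact Subalgebra.sum_mem _ fun i _ ↦ isPolyFun_toMatrix_pow b A k i i

end PolynomialFunctions

section AdjointGroup

open LieAlgebra

variable {g : Type*} [LieRing g] [LieAlgebra ℂ g] [FiniteDimensional ℂ g]

lemma endExp_eq_exp [Module ℚ g] {A : Module.End ℂ g} (hA : IsNilpotent A) :
    endExp A = IsNilpotent.exp A := by
  have hpow : A ^ (Module.finrank ℂ g + 1) = 0 := by
    have h := LinearMap.aeval_self_charpoly A
    rw [hA.charpoly_eq_X_pow_finrank, map_pow, Polynomial.aeval_X] at h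
    rw [pow_succ, h, zero_mul]
  rw [IsNilpotent.exp_eq_sum hpow, endExp]
  refine Finset.sum_congr rfl fun k _ ↦ LinearMap.ext fun v ↦ ?_
  rw [LinearMap.smul_apply, LinearMap.smul_apply, ← Rat.cast_smul_eq_qsmul ℂ, Rat.cast_inv,
    Rat.cast_natCast]

lemma commute_endExp {P A : Module.End ℂ g} (h : Commute P A) : Commute P (endExp A) :=
  Commute.sum_right _ _ _ fun k _ ↦ (h.pow_right k).smul_right _

lemma endExp_ad_lie {x : g} (hx : IsNilpotent (ad ℂ g x)) (y z : g) :
    endExp (ad ℂ g x) ⁅y, z⁆ = ⁅endExp (ad ℂ g x) y, endExp (ad ℂ g x) z⁆ := by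
  let : Module ℚ g := Module.compHom g (algebraMap ℚ ℂ)
  let : LieAlgebra ℚ g := { lie_smul := fun t x y ↦ lie_smul (algebraMap ℚ ℂ t) x y }
  have had : (LieDerivation.ad ℂ g x).toLinearMap = ad ℂ g x := by
    ext
    simp
  have hnil : IsNilpotent (LieDerivation.ad ℂ g x).toLinearMap := had.symm ▸ hx
  have hexp (y : g) : endExp (ad ℂ g x) y = LieDerivation.exp (LieDerivation.ad ℂ g x) hnil y := by
    rw [endExp_eq_exp hx, LieDerivation.exp_map_apply, had]
  rw [hexp, hexp, hexp, LieEquiv.map_lie]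

lemma map_lie_of_mem_adjointGroup {u : g ≃ₗ[ℂ] g} (hu : u ∈ adjointGroup g) (x y : g) :
    u ⁅x, y⁆ = ⁅u x, u y⁆ := by
  induction hu using Subgroup.closure_induction generalizing x y with
  | mem u hu =>
    obtain ⟨a, ha, hua⟩ := hu
    have happly (y : g) : u y = endExp (ad ℂ g a) y := LinearMap.congr_fun hua y
    rw [happly, happly, happly, endExp_ad_lie ha]
  | one => rfl
  | mul a b _ _ ha hb => rw [LinearEquiv.mul_apply, hb, ha]; rfl
  | inv a _ ha =>
    refine a.injective ?_
    rw [ha]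
    change a (a.symm _) = ⁅a (a.symm _), a (a.symm _)⁆
    simp only [a.apply_symm_apply]

lemma apply_comm_of_mem_adjointGroup (P : g →ₗ⁅ℂ,g⁆ g) {u : g ≃ₗ[ℂ] g}
    (hu : u ∈ adjointGroup g) (x : g) : P (u x) = u (P x) := by
  induction hu using Subgroup.closure_induction generalizing x with
  | mem u hu =>
    obtain ⟨a, -, hua⟩ := hu
    have hPa : Commute (P : Module.End ℂ g) (ad ℂ g a) :=
      LinearMap.ext fun y ↦ LieModuleHom.map_lie P a y
    have hPu := (commute_endExp hPa).eq
    rw [← hua] at hPu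
    exact LinearMap.congr_fun hPu x
  | one => rfl
  | mul a b _ _ ha hb => rw [LinearEquiv.mul_apply, ha, hb]; rfl
  | inv a _ ha =>
    refine a.injective ?_
    rw [← ha]
    change P (a (a.symm x)) = a (a.symm (P x))
    rw [a.apply_symm_apply, a.apply_symm_apply]

lemma trace_ad_pow_apply_of_mem_adjointGroup (P : g →ₗ⁅ℂ,g⁆ g) {u : g ≃ₗ[ℂ] g}
    (hu : u ∈ adjointGroup g) (v : g) (k : ℕ) :
    LinearMap.trace ℂ g (ad ℂ g (P (u v)) ^ k) = LinearMap.trace ℂ g (ad ℂ g (P v) ^ k) := by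
  let e : g ≃ₗ⁅ℂ⁆ g := { u with map_lie' := map_lie_of_mem_adjointGroup hu _ _ }
  have hconj : ad ℂ g (P (u v)) = LinearEquiv.conjAlgEquiv ℂ u (ad ℂ g (P v)) := by
    rw [apply_comm_of_mem_adjointGroup P hu]
    exact (conj_ad_apply e (P v)).symm
  rw [hconj, ← map_pow]
  exact LinearMap.trace_conj' _ u

lemma trace_ad_pow_apply_of_mem_primeGroup {φ : g ≃ₗ[ℂ] g}
    (hφ : φ ∈ primeGroup (adjointGroup g)) (P : g →ₗ⁅ℂ,g⁆ g) (v : g) (k : ℕ) :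
    LinearMap.trace ℂ g (ad ℂ g (P (φ v)) ^ k) = LinearMap.trace ℂ g (ad ℂ g (P v) ^ k) :=
  hφ (fun v ↦ LinearMap.trace ℂ g (ad ℂ g (P v) ^ k))
    (isPolyFun_trace_pow ((ad ℂ g : g →ₗ[ℂ] Module.End ℂ g) ∘ₗ (P : g →ₗ[ℂ] g)) k)
    (fun _ hu v ↦ trace_ad_pow_apply_of_mem_adjointGroup P hu v k) v

end AdjointGroup

/-- Let `g` be a complex semisimple Lie algebra with decomposition
`g = g₁ ⊕ ⋯ ⊕ g_r` into simple ideals, let `G = Aut(g)⁰` be its adjoint group acting on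
`V = g`, and let `φ ∈ G'`.  Then `φ(gᵢ) = gᵢ` for every `i`, and the restriction of `φ`
to `gᵢ` equals `εᵢ • σᵢ` where `εᵢ ∈ {1, -1}` and `σᵢ` is a Lie algebra automorphism
of `gᵢ`. -/
theorem stmt0 (g : Type) [LieRing g] [LieAlgebra ℂ g] [FiniteDimensional ℂ g]
    (r : ℕ) (I : Fin r → LieIdeal ℂ g)
    (hsimple : ∀ i, LieAlgebra.IsSimple ℂ (I i))
    (hindep : iSupIndep fun i => ((I i) : LieSubmodule ℂ g g).toSubmodule)
    (hspan : ⨆ i, ((I i) : LieSubmodule ℂ g g).toSubmodule = ⊤)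
    (φ : g ≃ₗ[ℂ] g) (hφ : φ ∈ primeGroup (adjointGroup g)) :
    ∀ i : Fin r,
      (((I i) : LieSubmodule ℂ g g).toSubmodule.map (φ : g →ₗ[ℂ] g)
          = ((I i) : LieSubmodule ℂ g g).toSubmodule) ∧
      ∃ (ε : ℂ) (σ : (I i) ≃ₗ⁅ℂ⁆ (I i)), (ε = 1 ∨ ε = -1) ∧
        ∀ x : (I i), φ (x : g) = ε • ((σ x : (I i)) : g) := by
  have := isKilling_of_iSupIndep_of_iSup_eq_top hsimple
    (LieSubmodule.iSupIndep_toSubmodule.mp hindep) (LieSubmodule.iSup_toSubmodule_eq_top.mp hspan)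
  exact fun i ↦ stmt0_general (I i) φ (trace_ad_pow_apply_of_mem_primeGroup hφ)
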